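/- arXiv:2210.09974 — 6 statements merged into one kernel-verified Lean document; each statement's English description precedes it below -/
import Mathlib

section
/- For every n ≥ 1, the complex vector space of 2^n × 2^n complex matrices A satisfying A·R(π) = R(π)·A for every permutation π ∈ S_n (the commutant of the qubit-defining representation of S_n) has complex dimension equal to the binomial coefficient C(n+3, 3), i.e. the tetrahedral number Te_{n+1}. Consequently, the number of free complex parameters of an S_n-equivariant operator on n qubits is C(n+3,3) ∈ Θ(n³). -/
open Matrix

/-- The qubit-defining representation of `S_n` on `(ℂ²)^{⊗n}`: the permutation matrix acting on
the computational basis (indexed by bitstrings `z : Fin n → Fin 2`) via `R(π)|z⟩ = |z ∘ π⁻¹⟩`. -/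
noncomputable def qubitRep (n : ℕ) (π : Equiv.Perm (Fin n)) :
    Matrix (Fin n → Fin 2) (Fin n → Fin 2) ℂ :=
  Matrix.of fun y z => if y = (fun i => z (π.symm i)) then (1 : ℂ) else 0

/-- The commutant of the qubit-defining representation of `S_n`, as a complex subspace of the
`2^n × 2^n` matrices. -/
noncomputable def qubitCommutant (n : ℕ) :
    Submodule ℂ (Matrix (Fin n → Fin 2) (Fin n → Fin 2) ℂ) where
  carrier := {A | ∀ π : Equiv.Perm (Fin n), A * qubitRep n π = qubitRep n π * A}
  add_mem' := by
    intro A B hA hB π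
    simp [add_mul, mul_add, hA π, hB π]
  zero_mem' := by
    intro π
    simp
  smul_mem' := by
    intro c A hA π
    simp [Matrix.smul_mul, Matrix.mul_smul, hA π]

/-- Functions on a finite type with the same multiset of values differ by a permutation. -/
theorem exists_perm_of_map_eq {α β : Type*} [Fintype α] [DecidableEq β] (f g : α → β)
    (h : Finset.univ.val.map f = Finset.univ.val.map g) :
    ∃ σ : Equiv.Perm α, ∀ i, g (σ i) = f i := by
  have key : ∀ c, Fintype.card {a // f a = c} = Fintype.card {a // g a = c} := by
    intro c
    have h2 := congrArg (Multiset.count c) h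
    rw [Multiset.count_map, Multiset.count_map] at h2
    rw [Fintype.card_subtype, Fintype.card_subtype, Finset.card_def, Finset.card_def]
    simpa [Finset.filter_val, eq_comm] using h2
  exact ⟨Equiv.ofFiberEquiv (fun c => Fintype.equivOfCardEq (key c)),
    fun i => Equiv.ofFiberEquiv_map _ i⟩

theorem mem_qubitCommutant_iff (n : ℕ) (A : Matrix (Fin n → Fin 2) (Fin n → Fin 2) ℂ) :
    A ∈ qubitCommutant n ↔
      ∀ (π : Equiv.Perm (Fin n)) (y z : Fin n → Fin 2), A (y ∘ π) (z ∘ π) = A y z := by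
  have h1 : ∀ (π : Equiv.Perm (Fin n)) (y z : Fin n → Fin 2),
      (A * qubitRep n π) y z = A y (z ∘ π.symm) := by
    intro π y z
    simp only [Matrix.mul_apply, qubitRep, Matrix.of_apply, mul_ite, mul_one, mul_zero]
    simp [Function.comp_def]
  have h2 : ∀ (π : Equiv.Perm (Fin n)) (y z : Fin n → Fin 2),
      (qubitRep n π * A) y z = A (y ∘ π) z := by
    intro π y z
    have h3 : ∀ w : Fin n → Fin 2, (y = fun i => w (π.symm i)) ↔ y ∘ π = w := by
      intro w
      constructor
      · rintro rfl
        funext i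
        simp
      · rintro rfl
        funext i
        simp
    simp only [Matrix.mul_apply, qubitRep, Matrix.of_apply, ite_mul, one_mul, zero_mul, h3]
    simp
  change (∀ π : Equiv.Perm (Fin n), A * qubitRep n π = qubitRep n π * A) ↔ _
  constructor
  · intro h π y z
    have h4 := congrFun (congrFun (h π) y) (z ∘ π)
    rw [h1, h2] at h4
    rw [← h4]
    congr 1
    funext i
    simp
  · intro h π
    ext y z
    rw [h1, h2, ← h π y (z ∘ π.symm)]
    congr 1
    funext i
    simp

/-- The type of a pair of bitstrings: the multiset of pairs of bits. -/
def pairType (n : ℕ) (y z : Fin n → Fin 2) : Sym (Fin 2 × Fin 2) n :=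
  ⟨Finset.univ.val.map (fun i => (y i, z i)), by simp⟩

theorem pairType_comp (n : ℕ) (π : Equiv.Perm (Fin n)) (y z : Fin n → Fin 2) :
    pairType n (y ∘ π) (z ∘ π) = pairType n y z := by
  apply Subtype.ext
  change Finset.univ.val.map ((fun i => (y i, z i)) ∘ π) =
    Finset.univ.val.map (fun i => (y i, z i))
  rw [← Multiset.map_map, Multiset.map_univ_val_equiv]

theorem exists_pairType (n : ℕ) (s : Sym (Fin 2 × Fin 2) n) :
    ∃ p : (Fin n → Fin 2) × (Fin n → Fin 2), pairType n p.1 p.2 = s := by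
  obtain ⟨m, hm⟩ := s
  induction m using Quotient.inductionOn with
  | h l =>
    have hl : l.length = n := by simpa using hm
    subst hl
    refine ⟨(fun i => (l.get i).1, fun i => (l.get i).2), ?_⟩
    apply Subtype.ext
    change Finset.univ.val.map (fun i => l.get i) = (l : Multiset _)
    rw [Fin.univ_val_map, List.ofFn_get]

/-- The commutant is the space of functions on pair types. -/
noncomputable def commutantEquiv (n : ℕ) :
    (Sym (Fin 2 × Fin 2) n → ℂ) ≃ₗ[ℂ] qubitCommutant n where
  toFun f := ⟨Matrix.of fun y z => f (pairType n y z), by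
    rw [mem_qubitCommutant_iff]
    intro π y z
    exact congrArg f (pairType_comp n π y z)⟩
  map_add' _ _ := rfl
  map_smul' _ _ := rfl
  invFun A := fun s => A.1 (exists_pairType n s).choose.1 (exists_pairType n s).choose.2
  left_inv f := by
    funext s
    exact congrArg f (exists_pairType n s).choose_spec
  right_inv A := by
    apply Subtype.ext
    ext y z
    have hA := (mem_qubitCommutant_iff n A.1).1 A.2
    have hs := (exists_pairType n (pairType n y z)).choose_spec
    obtain ⟨σ, hσ⟩ := exists_perm_of_map_eq (fun i => (y i, z i))
      (fun i => ((exists_pairType n (pairType n y z)).choose.1 i,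
        (exists_pairType n (pairType n y z)).choose.2 i)) (congrArg Subtype.val hs).symm
    simp only [Prod.mk.injEq] at hσ
    change A.1 _ _ = A.1 y z
    rw [← hA σ]
    exact congrArg₂ A.1 (funext fun i => (hσ i).1) (funext fun i => (hσ i).2)

/-- **Free parameters in `S_n`-equivariant operators.** The commutant of the qubit-defining
representation of `S_n` has complex dimension the tetrahedral number `Te_{n+1} = C(n+3,3)`. -/
theorem finrank_qubitCommutant (n : ℕ) (hn : 1 ≤ n) :
    Module.finrank ℂ (qubitCommutant n) = (n + 3).choose 3 := by
  classical
  rw [← (commutantEquiv n).finrank_eq, Module.finrank_fintype_fun_eq_card,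
    Sym.card_sym_eq_choose]
  have h : Fintype.card (Fin 2 × Fin 2) + n - 1 = n + 3 := by
    simp
    omega
  rw [h]
  exact Nat.choose_symm_add
end

section
/- For every natural number n ≥ 1, the sum over m = 0, 1, …, ⌊n/2⌋ of (n − 2m + 1) · [n!·(n − 2m + 1)! / ((n − m + 1)!·m!·(n − 2m)!)] equals 2^n. (This expresses the fact that the block dimensions d_λ = n−2m+1 and multiplicities m_λ = n!(n−2m+1)!/((n−m+1)! m! (n−2m)!) of the irreducible decomposition of the qubit-defining representation of S_n satisfy Σ_λ m_λ d_λ = 2^n.) -/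
/-- The multiplicity at `m = 0` is `1`. -/
theorem mult_zero (n : ℕ) :
    n.factorial * (n - 2 * 0 + 1).factorial /
      ((n - 0 + 1).factorial * (0 : ℕ).factorial * (n - 2 * 0).factorial) = 1 := by
  apply Nat.div_eq_of_eq_mul_left
  · positivity
  · simp [mul_comm]

/-- The multiplicity is a difference of consecutive binomial coefficients. -/
theorem mult_succ (n j : ℕ) (h : 2 * (j + 1) ≤ n) :
    ((n.factorial * (n - 2 * (j + 1) + 1).factorial /
      ((n - (j + 1) + 1).factorial * (j + 1).factorial * (n - 2 * (j + 1)).factorial) : ℕ) : ℤ)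
      = (n.choose (j + 1) : ℤ) - n.choose j := by
  obtain ⟨r, rfl⟩ := Nat.exists_eq_add_of_le h
  have e1 : 2 * (j + 1) + r - 2 * (j + 1) = r := by omega
  have e2 : 2 * (j + 1) + r - (j + 1) = j + 1 + r := by omega
  have e3 : 2 * (j + 1) + r - j = j + 1 + r + 1 := by omega
  have h1 := Nat.choose_mul_factorial_mul_factorial (n := 2 * (j + 1) + r) (k := j + 1) (by omega)
  have h2 := Nat.choose_mul_factorial_mul_factorial (n := 2 * (j + 1) + r) (k := j) (by omega)
  rw [e2] at h1
  rw [e3] at h2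
  rw [e1, e2]
  rw [Nat.factorial_succ (j + 1 + r), Nat.factorial_succ j] at *
  rw [Nat.factorial_succ r]
  generalize (2 * (j + 1) + r).choose (j + 1) = a at *
  generalize (2 * (j + 1) + r).choose j = b at *
  generalize (2 * (j + 1) + r).factorial = N at *
  have p1 := Nat.factorial_pos (j + 1 + r)
  have p2 := Nat.factorial_pos j
  have p3 := Nat.factorial_pos r
  generalize (j + 1 + r).factorial = A at *
  generalize j.factorial = B at *
  generalize r.factorial = C at *
  zify at h1 h2
  push_cast
  apply Int.ediv_eq_of_eq_mul_left
  · positivity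
  · linear_combination (-(j + 1 + r + 1 : ℤ) * C) * h1 + ((j + 1 : ℤ) * C) * h2

/-- Summation by parts for the truncated sum. -/
theorem partial_sum (n k : ℕ) (h : 2 * k ≤ n) :
    ((∑ m ∈ Finset.range (k + 1),
      (n - 2 * m + 1) *
        (n.factorial * (n - 2 * m + 1).factorial /
          ((n - m + 1).factorial * m.factorial * (n - 2 * m).factorial)) : ℕ) : ℤ)
      = ((n : ℤ) - 1 - 2 * k) * n.choose k
        + 2 * ∑ m ∈ Finset.range (k + 1), (n.choose m : ℤ) := by
  induction k with
  | zero =>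
    rw [zero_add, Finset.sum_range_one, mult_zero]
    simp
    ring
  | succ k ih =>
    rw [Finset.sum_range_succ, Nat.cast_add, ih (by omega), Nat.cast_mul, mult_succ n k h,
      Finset.sum_range_succ _ (k + 1)]
    push_cast [Nat.cast_sub h]
    ring

/-- Pascal's rule, summed. -/
theorem pascal_sum (n k : ℕ) :
    ∑ m ∈ Finset.range (k + 1), ((n + 1).choose m : ℤ)
      = 2 * ∑ m ∈ Finset.range (k + 1), (n.choose m : ℤ) - n.choose k := by
  induction k with
  | zero => simp
  | succ k ih =>
    rw [Finset.sum_range_succ, ih, Finset.sum_range_succ _ (k + 1), Nat.choose_succ_succ]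
    push_cast
    ring

/-- **Total dimension of the isotypic decomposition.** The block dimensions
`d_λ = n − 2m + 1` and multiplicities `m_λ = n!(n−2m+1)!/((n−m+1)! m! (n−2m)!)` of the
qubit-defining representation of `S_n` satisfy `Σ_λ m_λ d_λ = 2^n`. -/
theorem sum_mult_dim_eq_two_pow (n : ℕ) (hn : 1 ≤ n) :
    ∑ m ∈ Finset.range (n / 2 + 1),
      (n - 2 * m + 1) *
        (n.factorial * (n - 2 * m + 1).factorial /
          ((n - m + 1).factorial * m.factorial * (n - 2 * m).factorial)) = 2 ^ n := by
  have key := partial_sum n (n / 2) (by omega)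
  obtain ⟨p, hp | hp⟩ := Nat.even_or_odd' n
  · have e : n / 2 = p := by omega
    have h1 := pascal_sum n p
    have h2 := Nat.sum_range_choose_halfway p
    zify at h2
    rw [e] at key ⊢
    zify
    push_cast at key
    rw [key]
    subst hp
    rw [h2] at h1
    rw [pow_mul]
    push_cast
    norm_num
    linear_combination -h1
  · have e : n / 2 = p := by omega
    have h2 := Nat.sum_range_choose_halfway p
    zify at h2
    rw [e] at key ⊢
    zify
    push_cast at key
    rw [key]
    subst hp
    rw [h2, pow_succ, pow_mul]
    push_cast
    norm_num
    ring
end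

section
/- Fix d ≥ 2 and let μ denote the normalized Haar probability measure on the group U(d) of d×d complex unitary matrices. For any d×d complex matrices H and O, the integral over U ∈ U(d) of Tr[(H·(U† O U) − (U† O U)·H)²] equals −(2d/(d²−1)) · Δ(H) · Δ(O). -/
open Matrix MeasureTheory

/-- `Δ(B) = Tr[B²] − (Tr B)²/d`. -/
noncomputable def DeltaM (d : ℕ) (B : Matrix (Fin d) (Fin d) ℂ) : ℂ :=
  (B * B).trace - B.trace ^ 2 / (d : ℂ)

theorem hts_conj_single {d : ℕ} (V : Matrix (Fin d) (Fin d) ℂ) (i j : Fin d) :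
    Vᴴ * Matrix.single i j 1 * V = Matrix.vecMulVec (star (V i)) (V j) := by
  ext a b
  rw [Matrix.mul_apply, Finset.sum_eq_single j]
  · simp [Matrix.vecMulVec_apply]
  · intro c _ hc
    simp [hc]
  · simp

theorem hts_diag_zero {d : ℕ}
    (B : Matrix (Fin d) (Fin d) ℂ →ₗ[ℂ] Matrix (Fin d) (Fin d) ℂ →ₗ[ℂ] ℂ)
    (hB : ∀ V ∈ Matrix.unitaryGroup (Fin d) ℂ, ∀ X Y, B (Vᴴ * X * V) (Vᴴ * Y * V) = B X Y)
    (i j k l : Fin d) (h1 : ¬ (i = j ∧ k = l)) (h2 : ¬ (i = l ∧ k = j)) :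
    B (Matrix.single i j 1) (Matrix.single k l 1) = 0 := by
  have key : ∀ p : Fin d,
      (star (if i = p then Complex.I else 1) * (if j = p then Complex.I else 1)) *
      ((star (if k = p then Complex.I else 1) * (if l = p then Complex.I else 1)) *
        B (Matrix.single i j 1) (Matrix.single k l 1)) =
        B (Matrix.single i j 1) (Matrix.single k l 1) := by
    intro p
    set v : Fin d → ℂ := fun a => if a = p then Complex.I else 1 with hv
    have hV : Matrix.diagonal v ∈ Matrix.unitaryGroup (Fin d) ℂ := by
      rw [Matrix.mem_unitaryGroup_iff, Matrix.star_eq_conjTranspose,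
        Matrix.diagonal_conjTranspose, Matrix.diagonal_mul_diagonal, ← Matrix.diagonal_one]
      congr 1
      ext a
      by_cases h : a = p <;> simp [hv, h]
    have hs : ∀ a b : Fin d, (Matrix.diagonal v)ᴴ * Matrix.single a b 1 * Matrix.diagonal v
        = (star (v a) * v b) • Matrix.single a b 1 := by
      intro a b
      rw [Matrix.diagonal_conjTranspose]
      ext x y
      rw [Matrix.mul_diagonal, Matrix.diagonal_mul, Matrix.smul_apply, Matrix.single_apply]
      split_ifs with h
      · obtain ⟨rfl, rfl⟩ := h
        simp
      · simp
    have := hB _ hV (Matrix.single i j 1) (Matrix.single k l 1)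
    rw [hs, hs] at this
    simp only [map_smul, LinearMap.smul_apply, smul_eq_mul, hv] at this
    linear_combination this
  generalize B (Matrix.single i j 1) (Matrix.single k l 1) = x at key
  have hx : ∀ c : ℂ, c ≠ 1 → c * x = x → x = 0 := by
    intro c hc h
    have : (c - 1) * x = 0 := by linear_combination h
    exact (mul_eq_zero.mp this).resolve_left (sub_ne_zero.mpr hc)
  have hI1 : Complex.I ≠ 1 := by intro h; simpa using congrArg Complex.im h
  have hI2 : -Complex.I ≠ 1 := by intro h; simpa using congrArg Complex.im h
  have hI3 : (-1 : ℂ) ≠ 1 := by norm_num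
  have hii : Complex.I * Complex.I = -1 := Complex.I_mul_I
  have ki := key i
  have kj := key j
  have kk := key k
  by_cases a1 : i = j
  · subst a1
    have a2 : k ≠ l := fun h => h1 ⟨rfl, h⟩
    have a3 : l ≠ k := fun h => a2 h.symm
    rcases eq_or_ne i k with a4 | a4 <;>
      simp [a2, a3, a4] at kk <;> first | exact hx _ hI2 (by linear_combination kk) | skip
    all_goals simp_all
  · have a1' : j ≠ i := fun h => a1 h.symm
    rcases eq_or_ne i l with a2 | a2
    · subst a2
      have a3 : k ≠ j := fun h => h2 ⟨rfl, h⟩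
      have a3' : j ≠ k := fun h => a3 h.symm
      simp [a1, a1', a3, a3'] at kj
      exact hx _ hI1 (by linear_combination kj)
    · have a2' : l ≠ i := fun h => a2 h.symm
      rcases eq_or_ne k i with a3 | a3
      · subst a3
        simp [a1, a1', a2, a2'] at ki
        exact hx _ hI3 (by linear_combination ki - x * hii)
      · simp [a1, a1', a2, a2', a3] at ki
        exact hx _ hI2 (by linear_combination ki)

theorem hts_perm {d : ℕ}
    (B : Matrix (Fin d) (Fin d) ℂ →ₗ[ℂ] Matrix (Fin d) (Fin d) ℂ →ₗ[ℂ] ℂ)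
    (hB : ∀ V ∈ Matrix.unitaryGroup (Fin d) ℂ, ∀ X Y, B (Vᴴ * X * V) (Vᴴ * Y * V) = B X Y)
    (σ : Equiv.Perm (Fin d)) (i j k l : Fin d) :
    B (Matrix.single (σ i) (σ j) 1) (Matrix.single (σ k) (σ l) 1) =
    B (Matrix.single i j 1) (Matrix.single k l 1) := by
  have hV : σ.permMatrix ℂ ∈ Matrix.unitaryGroup (Fin d) ℂ := by
    rw [Matrix.mem_unitaryGroup_iff, Matrix.star_eq_conjTranspose,
        Matrix.conjTranspose_permMatrix, ← Matrix.permMatrix_mul]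
    simp
  have hs : ∀ a b : Fin d, (σ.permMatrix ℂ)ᴴ * Matrix.single a b 1 * σ.permMatrix ℂ
        = Matrix.single (σ a) (σ b) 1 := by
    intro a b
    rw [hts_conj_single]
    ext x y
    by_cases h1 : σ a = x <;> by_cases h2 : σ b = y <;>
      simp [Matrix.vecMulVec_apply, Equiv.Perm.permMatrix, PEquiv.toMatrix_apply, Matrix.single_apply,
        h1, h2]
  rw [← hs, ← hs, hB _ hV]

theorem hts_rot {d : ℕ}
    (B : Matrix (Fin d) (Fin d) ℂ →ₗ[ℂ] Matrix (Fin d) (Fin d) ℂ →ₗ[ℂ] ℂ)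
    (hB : ∀ V ∈ Matrix.unitaryGroup (Fin d) ℂ, ∀ X Y, B (Vᴴ * X * V) (Vᴴ * Y * V) = B X Y)
    (p q : Fin d) (hpq : p ≠ q) :
    B (Matrix.single p p 1) (Matrix.single p p 1) =
    B (Matrix.single p p 1) (Matrix.single q q 1) +
    B (Matrix.single p q 1) (Matrix.single q p 1) := by
  have hqp : q ≠ p := hpq.symm
  set w : Fin d → ℂ := Pi.single p 1 + Pi.single q 2 with hw
  have hsw : star w = w := by
    ext a
    by_cases h : a = p <;> by_cases h' : a = q <;> simp [hw, Pi.single_apply, h, h', hpq, hqp]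
  have hww : w ⬝ᵥ w = 5 := by
    simp [hw, hpq, hqp]
    norm_num
  set V : Matrix (Fin d) (Fin d) ℂ := 1 - (2 / 5 : ℂ) • Matrix.vecMulVec w w with hVdef
  have hVH : Vᴴ = V := by
    rw [hVdef]
    simp [Matrix.conjTranspose_vecMulVec, hsw]
  have hV : V ∈ Matrix.unitaryGroup (Fin d) ℂ := by
    rw [Matrix.mem_unitaryGroup_iff, Matrix.star_eq_conjTranspose, hVH, hVdef]
    simp only [sub_mul, mul_sub, mul_one, one_mul, smul_mul_assoc, mul_smul_comm,
      Matrix.vecMulVec_mul_vecMulVec, hww]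
    ext a b
    simp
    ring
  have hVp : V p = (3 / 5 : ℂ) • Pi.single p 1 - (4 / 5 : ℂ) • Pi.single q 1 := by
    ext a
    by_cases h : a = p <;> by_cases h' : a = q <;>
      simp [hVdef, hw, Matrix.vecMulVec_apply, Matrix.one_apply, Pi.single_apply, h, h', hpq, hqp, eq_comm]
      <;> first | (norm_num; done) | grind
  have hs : Vᴴ * Matrix.single p p 1 * V =
      (9 / 25 : ℂ) • Matrix.single p p 1 + (16 / 25 : ℂ) • Matrix.single q q 1
      - (12 / 25 : ℂ) • Matrix.single p q 1 - (12 / 25 : ℂ) • Matrix.single q p 1 := by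
    rw [hts_conj_single, hVp]
    ext a b
    by_cases h : a = p <;> by_cases h' : a = q <;> by_cases g : b = p <;> by_cases g' : b = q <;>
      simp_all [Matrix.vecMulVec_apply, Pi.single_apply, Matrix.single_apply, eq_comm] <;> norm_num
  have h := hB V hV (Matrix.single p p 1) (Matrix.single p p 1)
  rw [hs] at h
  have e1 := hts_perm B hB (Equiv.swap p q) p p p p
  have e2 := hts_perm B hB (Equiv.swap p q) p p q q
  have e3 := hts_perm B hB (Equiv.swap p q) p q q p
  simp only [Equiv.swap_apply_left, Equiv.swap_apply_right] at e1 e2 e3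
  have z := hts_diag_zero B hB
  simp only [map_add, map_sub, map_smul, LinearMap.add_apply, LinearMap.sub_apply,
    LinearMap.smul_apply, smul_eq_mul, e1, e2, e3,
    z p p p q (by simp [hpq]) (by simp [hpq]), z p p q p (by simp [hqp]) (by simp [hqp]),
    z q q p q (by simp [hpq]) (by simp [hpq]), z q q q p (by simp [hqp]) (by simp [hqp]),
    z p q p p (by simp [hpq]) (by simp [hpq]), z p q q q (by simp [hpq]) (by simp [hpq]),
    z q p p p (by simp [hqp]) (by simp [hqp]), z q p q q (by simp [hqp]) (by simp [hqp]),
    z p q p q (by simp [hpq]) (by simp [hpq]), z q p q p (by simp [hqp]) (by simp [hqp])] at h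
  linear_combination (-625 / 288 : ℂ) * h

theorem hts_form {d : ℕ} (hd : 2 ≤ d)
    (B : Matrix (Fin d) (Fin d) ℂ →ₗ[ℂ] Matrix (Fin d) (Fin d) ℂ →ₗ[ℂ] ℂ)
    (hB : ∀ V ∈ Matrix.unitaryGroup (Fin d) ℂ, ∀ X Y, B (Vᴴ * X * V) (Vᴴ * Y * V) = B X Y) :
    ∃ β γ : ℂ, ∀ X Y, B X Y = β * (X.trace * Y.trace) + γ * (X * Y).trace := by
  let p : Fin d := ⟨0, by omega⟩
  let q : Fin d := ⟨1, by omega⟩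
  have hpq : p ≠ q := by simp [p, q]
  have hperm : ∀ i k : Fin d, i ≠ k → ∃ σ : Equiv.Perm (Fin d), σ p = i ∧ σ q = k := by
    intro i k hik
    refine ⟨Equiv.swap (Equiv.swap p i q) k * Equiv.swap p i, ?_, ?_⟩
    · simp only [Equiv.Perm.mul_apply, Equiv.swap_apply_left]
      apply Equiv.swap_apply_of_ne_of_ne _ hik
      intro h
      have := (Equiv.swap p i).injective ((Equiv.swap_apply_left p i).trans h)
      exact hpq this
    · simp
  have hb : ∀ i j k l : Fin d, B (Matrix.single i j 1) (Matrix.single k l 1) =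
      B (Matrix.single p p 1) (Matrix.single q q 1) * ((if i = j then 1 else 0) *
        (if k = l then 1 else 0)) +
      B (Matrix.single p q 1) (Matrix.single q p 1) * ((if i = l then 1 else 0) *
        (if k = j then 1 else 0)) := by
    intro i j k l
    by_cases h1 : i = j ∧ k = l
    · obtain ⟨rfl, rfl⟩ := h1
      by_cases h : i = k
      · subst h
        have := hts_perm B hB (Equiv.swap p i) p p p p
        simp only [Equiv.swap_apply_left] at this
        rw [this, hts_rot B hB p q hpq]
        simp
      · obtain ⟨σ, rfl, rfl⟩ := hperm i k h
        rw [hts_perm B hB]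
        simp [hpq]
    · by_cases h2 : i = l ∧ k = j
      · obtain ⟨rfl, rfl⟩ := h2
        have h : i ≠ k := fun h => h1 ⟨h, h.symm⟩
        obtain ⟨σ, rfl, rfl⟩ := hperm i k h
        rw [hts_perm B hB]
        simp [hpq]
      · rw [hts_diag_zero B hB i j k l h1 h2]
        by_cases a : i = j <;> by_cases b : k = l <;> by_cases c : i = l <;>
          by_cases e : k = j <;> simp_all
  obtain ⟨β, hβ⟩ : ∃ β, β = B (Matrix.single p p 1) (Matrix.single q q 1) := ⟨_, rfl⟩
  obtain ⟨γ, hγ⟩ : ∃ γ, γ = B (Matrix.single p q 1) (Matrix.single q p 1) := ⟨_, rfl⟩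
  simp only [← hβ, ← hγ] at hb
  refine ⟨β, γ, ?_⟩
  intro X Y
  have hX : ∀ X : Matrix (Fin d) (Fin d) ℂ, X = ∑ i, ∑ j, X i j • Matrix.single i j 1 := by
    intro X
    conv_lhs => rw [Matrix.matrix_eq_sum_single X]
    simp
  have step : ∀ i j : Fin d, B (Matrix.single i j 1) Y =
      β * ((if i = j then 1 else 0) * Y.trace) +
      γ * Y j i := by
    intro i j
    conv_lhs => rw [hX Y]
    simp only [map_sum, map_smul, smul_eq_mul, hb]
    simp only [mul_add, Finset.sum_add_distrib]
    congr 1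
    · have : ∀ k l : Fin d, Y k l * (β * ((if i = j then 1 else 0) * (if k = l then 1 else 0))) =
          if k = l then β * (if i = j then 1 else 0) * Y k l else 0 := by
        intro k l
        by_cases h : k = l <;> simp [h]
        split_ifs <;> ring
      simp only [this, Finset.sum_ite_eq, Finset.mem_univ, if_true, ← Finset.mul_sum]
      rw [mul_assoc]
      rfl
    · have : ∀ k l : Fin d, Y k l * (γ * ((if i = l then 1 else 0) * (if k = j then 1 else 0))) =
          if i = l then (if k = j then γ * Y k l else 0) else 0 := by
        intro k l
        split_ifs <;> ring
      simp only [this, Finset.sum_ite_eq, Finset.sum_ite_eq', Finset.mem_univ, if_true]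
  conv_lhs => rw [hX X]
  simp only [map_sum, map_smul, LinearMap.sum_apply, LinearMap.smul_apply, smul_eq_mul, step]
  simp only [mul_add, Finset.sum_add_distrib]
  congr 1
  · have : ∀ i j : Fin d, X i j * (β * ((if i = j then 1 else 0) * Y.trace)) =
        if i = j then β * Y.trace * X i j else 0 := by
      intro i j
      split_ifs <;> ring
    simp only [this, Finset.sum_ite_eq, Finset.mem_univ, if_true, ← Finset.mul_sum]
    have t : ∑ i, X i i = X.trace := rfl
    rw [t]
    ring
  · simp only [Matrix.trace, Matrix.diag_apply, Matrix.mul_apply, Finset.mul_sum]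
    refine Finset.sum_congr rfl fun i _ => Finset.sum_congr rfl fun j _ => ?_
    ring

theorem hts_compact (d : ℕ) : CompactSpace (Matrix.unitaryGroup (Fin d) ℂ) := by
  refine (isCompact_iff_compactSpace
    (s := (Matrix.unitaryGroup (Fin d) ℂ : Set (Matrix (Fin d) (Fin d) ℂ)))).mp ?_
  have hK : IsCompact (Set.pi Set.univ (fun _ : Fin d => Set.pi Set.univ
      (fun _ : Fin d => Metric.closedBall (0 : ℂ) 1))) :=
    isCompact_univ_pi fun _ => isCompact_univ_pi fun _ => isCompact_closedBall _ _
  refine hK.of_isClosed_subset (isClosed_unitary (R := Matrix (Fin d) (Fin d) ℂ)) ?_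
  intro U hU i _ j _
  simpa using entry_norm_bound_of_unitary hU i j

/-- The integrand, polarized. -/
noncomputable def htsF {d : ℕ} (H X Y : Matrix (Fin d) (Fin d) ℂ)
    (U : Matrix.unitaryGroup (Fin d) ℂ) : ℂ :=
  ((H * ((U : Matrix (Fin d) (Fin d) ℂ)ᴴ * X * (U : Matrix (Fin d) (Fin d) ℂ)) -
      ((U : Matrix (Fin d) (Fin d) ℂ)ᴴ * X * (U : Matrix (Fin d) (Fin d) ℂ)) * H) *
    (H * ((U : Matrix (Fin d) (Fin d) ℂ)ᴴ * Y * (U : Matrix (Fin d) (Fin d) ℂ)) -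
      ((U : Matrix (Fin d) (Fin d) ℂ)ᴴ * Y * (U : Matrix (Fin d) (Fin d) ℂ)) * H)).trace

theorem htsF_integrable {d : ℕ}
    [MeasurableSpace (Matrix.unitaryGroup (Fin d) ℂ)]
    [BorelSpace (Matrix.unitaryGroup (Fin d) ℂ)]
    (μ : Measure (Matrix.unitaryGroup (Fin d) ℂ)) [IsProbabilityMeasure μ]
    (H X Y : Matrix (Fin d) (Fin d) ℂ) : Integrable (htsF H X Y) μ := by
  haveI := hts_compact d
  have hc : Continuous (htsF H X Y) := by
    unfold htsF
    have : Continuous (fun U : Matrix.unitaryGroup (Fin d) ℂ => (U : Matrix (Fin d) (Fin d) ℂ)) :=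
      continuous_subtype_val
    fun_prop
  exact hc.integrable_of_hasCompactSupport (HasCompactSupport.of_compactSpace _)

/-- The averaged bilinear form. -/
noncomputable def htsB {d : ℕ}
    [MeasurableSpace (Matrix.unitaryGroup (Fin d) ℂ)]
    [BorelSpace (Matrix.unitaryGroup (Fin d) ℂ)]
    (μ : Measure (Matrix.unitaryGroup (Fin d) ℂ)) [IsProbabilityMeasure μ]
    (H : Matrix (Fin d) (Fin d) ℂ) :
    Matrix (Fin d) (Fin d) ℂ →ₗ[ℂ] Matrix (Fin d) (Fin d) ℂ →ₗ[ℂ] ℂ :=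
  LinearMap.mk₂ ℂ (fun X Y => ∫ U, htsF H X Y U ∂μ)
    (by
      intro X X' Y
      rw [← integral_add (htsF_integrable μ H X Y) (htsF_integrable μ H X' Y)]
      congr 1
      ext U
      simp only [htsF, ← Matrix.trace_add]
      congr 1
      noncomm_ring)
    (by
      intro c X Y
      rw [← integral_smul]
      congr 1
      ext U
      simp only [htsF, ← Matrix.trace_smul, mul_smul_comm, smul_mul_assoc, ← smul_sub])
    (by
      intro X Y Y'
      rw [← integral_add (htsF_integrable μ H X Y) (htsF_integrable μ H X Y')]
      congr 1
      ext U
      simp only [htsF, ← Matrix.trace_add]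
      congr 1
      noncomm_ring)
    (by
      intro c X Y
      rw [← integral_smul]
      congr 1
      ext U
      simp only [htsF, ← Matrix.trace_smul, mul_smul_comm, smul_mul_assoc, ← smul_sub])

theorem htsF_mul {d : ℕ} (H X Y : Matrix (Fin d) (Fin d) ℂ)
    (V U : Matrix.unitaryGroup (Fin d) ℂ) :
    htsF H X Y (V * U) = htsF H ((V : Matrix (Fin d) (Fin d) ℂ)ᴴ * X * V)
      ((V : Matrix (Fin d) (Fin d) ℂ)ᴴ * Y * V) U := by
  simp only [htsF, Submonoid.coe_mul, Matrix.conjTranspose_mul, Matrix.mul_assoc]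

theorem htsF_one {d : ℕ} (H X Y : Matrix (Fin d) (Fin d) ℂ) :
    htsF H X Y 1 = ((H * X - X * H) * (H * Y - Y * H)).trace := by
  simp [htsF]

theorem hts_four {d : ℕ} (H : Matrix (Fin d) (Fin d) ℂ) (i j : Fin d) :
    ((H * Matrix.single i j 1 - Matrix.single i j 1 * H) *
      (H * Matrix.single j i 1 - Matrix.single j i 1 * H)).trace =
      2 * (H i i * H j j) - (H * H) i i - (H * H) j j := by
  have key : ∀ (A : Matrix (Fin d) (Fin d) ℂ) (a b : Fin d),
      (A * Matrix.single a b 1).trace = A b a := by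
    intro A a b
    rw [Matrix.trace_mul_single]
    simp
  have m1 : ∀ (A : Matrix (Fin d) (Fin d) ℂ) (a b c e : Fin d),
      Matrix.single a b 1 * A * Matrix.single c e 1 = A b c • Matrix.single a e (1 : ℂ) := by
    intro A a b c e
    simp
  have e1 : ((H * Matrix.single i j 1 - Matrix.single i j 1 * H) *
      (H * Matrix.single j i 1 - Matrix.single j i 1 * H)) =
      H * (Matrix.single i j 1 * H * Matrix.single j i 1)
      - H * (Matrix.single i j 1 * 1 * Matrix.single j i 1) * H
      - Matrix.single i j 1 * (H * H) * Matrix.single j i 1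
      + (Matrix.single i j 1 * H * Matrix.single j i 1) * H := by
    noncomm_ring
  rw [e1, Matrix.trace_add, Matrix.trace_sub, Matrix.trace_sub, m1, m1, m1]
  rw [Matrix.trace_mul_comm (H * _) H, Matrix.trace_mul_comm (_ • _) H, ← Matrix.mul_assoc]
  simp only [mul_smul_comm, Matrix.trace_smul, key, smul_eq_mul, Matrix.one_apply_eq,
    Matrix.trace_single_eq_same]
  ring

theorem hts_swap_sum_one {d : ℕ} (hd : (d : ℂ) ≠ 0) (H : Matrix (Fin d) (Fin d) ℂ) :
    ∑ i, ∑ j, htsF H (Matrix.single i j 1) (Matrix.single j i 1) 1 =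
      -2 * d * DeltaM d H := by
  simp only [htsF_one, hts_four, Finset.sum_sub_distrib, ← Finset.mul_sum]
  have t1 : ∑ i, H i i = H.trace := rfl
  have t2 : ∑ i, (H * H) i i = (H * H).trace := rfl
  simp only [← Finset.sum_mul, t1, t2, Finset.sum_const, Finset.card_univ, Fintype.card_fin,
    nsmul_eq_mul, ← Finset.mul_sum, DeltaM]
  field_simp
  ring

/-- The swap tensor is invariant under conjugation by a unitary. -/
theorem hts_swap_sum {d : ℕ} (hd : (d : ℂ) ≠ 0) (H : Matrix (Fin d) (Fin d) ℂ)
    (U : Matrix.unitaryGroup (Fin d) ℂ) :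
    ∑ i, ∑ j, htsF H (Matrix.single i j 1) (Matrix.single j i 1) U =
      -2 * d * DeltaM d H := by
  obtain ⟨V, hV⟩ := U
  have hVV : V * Vᴴ = 1 := by rwa [Matrix.mem_unitaryGroup_iff] at hV
  have hVV' : Vᴴ * V = 1 := by rwa [Matrix.mem_unitaryGroup_iff'] at hV
  have hA : ∀ A, Vᴴ * (V * A) = A := fun A => by rw [← Matrix.mul_assoc, hVV', Matrix.one_mul]
  have h1 : ∀ X Y, htsF H X Y ⟨V, hV⟩ = htsF (V * H * Vᴴ) X Y 1 := by
    intro X Y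
    rw [htsF_one]
    have e : ∀ X, H * (Vᴴ * X * V) - Vᴴ * X * V * H =
        Vᴴ * ((V * H * Vᴴ) * X - X * (V * H * Vᴴ)) * V := by
      intro X
      simp only [Matrix.mul_sub, Matrix.sub_mul, Matrix.mul_assoc, hVV', hA, Matrix.mul_one]
    simp only [htsF, e]
    rw [Matrix.mul_assoc, Matrix.mul_assoc, Matrix.trace_mul_comm]
    simp only [Matrix.mul_assoc, hVV, Matrix.mul_one]
    congr 2
    simp only [← Matrix.mul_assoc, hVV, Matrix.one_mul]
  have h2 : DeltaM d (V * H * Vᴴ) = DeltaM d H := by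
    have e1 : (V * H * Vᴴ).trace = H.trace := by
      rw [Matrix.trace_mul_comm, hA]
    have e2 : (V * H * Vᴴ * (V * H * Vᴴ)).trace = (H * H).trace := by
      have : V * H * Vᴴ * (V * H * Vᴴ) = V * (H * H) * Vᴴ := by
        simp only [Matrix.mul_assoc, hA]
      rw [this, Matrix.trace_mul_comm, hA]
    simp only [DeltaM, e1, e2]
  simp only [h1]
  rw [hts_swap_sum_one hd, h2]


/-- **Haar average of the squared commutator.** For a Haar-random unitary `U ∈ U(d)`,
`∫ Tr[[H, U† O U]²] dμ(U) = −(2d/(d²−1)) Δ(H) Δ(O)`. -/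
theorem haar_trace_sq_commutator (d : ℕ) (hd : 2 ≤ d)
    [MeasurableSpace (Matrix.unitaryGroup (Fin d) ℂ)]
    [BorelSpace (Matrix.unitaryGroup (Fin d) ℂ)]
    (μ : Measure (Matrix.unitaryGroup (Fin d) ℂ))
    [μ.IsHaarMeasure] [IsProbabilityMeasure μ]
    (H O : Matrix (Fin d) (Fin d) ℂ) :
    (∫ U : Matrix.unitaryGroup (Fin d) ℂ,
        (((H * ((U : Matrix (Fin d) (Fin d) ℂ)ᴴ * O * (U : Matrix (Fin d) (Fin d) ℂ)) -
              ((U : Matrix (Fin d) (Fin d) ℂ)ᴴ * O * (U : Matrix (Fin d) (Fin d) ℂ)) * H) *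
            (H * ((U : Matrix (Fin d) (Fin d) ℂ)ᴴ * O * (U : Matrix (Fin d) (Fin d) ℂ)) -
              ((U : Matrix (Fin d) (Fin d) ℂ)ᴴ * O * (U : Matrix (Fin d) (Fin d) ℂ)) * H)).trace) ∂μ)
      = -(2 * d / ((d : ℂ) ^ 2 - 1)) * DeltaM d H * DeltaM d O := by
  have hd0 : (d : ℂ) ≠ 0 := by
    have : d ≠ 0 := by omega
    exact_mod_cast this
  have hd1 : (d : ℂ) ^ 2 - 1 ≠ 0 := by
    intro h
    have h' : (d : ℂ) ^ 2 = 1 := sub_eq_zero.mp h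
    have h'' : d ^ 2 = 1 := by exact_mod_cast h'
    nlinarith
  have hinv : ∀ V ∈ Matrix.unitaryGroup (Fin d) ℂ, ∀ X Y,
      htsB μ H (Vᴴ * X * V) (Vᴴ * Y * V) = htsB μ H X Y := by
    intro V hV X Y
    simp only [htsB, LinearMap.mk₂_apply]
    rw [← integral_mul_left_eq_self (μ := μ) (htsF H X Y) ⟨V, hV⟩]
    simp only [htsF_mul]
  obtain ⟨β, γ, hf⟩ := hts_form hd (htsB μ H) hinv
  have h1 : htsB μ H 1 1 = 0 := by
    simp only [htsB, LinearMap.mk₂_apply]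
    have : ∀ U, htsF H 1 1 U = 0 := by
      intro U
      have hU : (U : Matrix (Fin d) (Fin d) ℂ)ᴴ * (U : Matrix (Fin d) (Fin d) ℂ) = 1 := by
        have := U.2
        rwa [Matrix.mem_unitaryGroup_iff'] at this
      simp [htsF, hU]
    simp [this]
  have h2 : ∑ i, ∑ j, htsB μ H (Matrix.single i j 1) (Matrix.single j i 1) =
      -2 * d * DeltaM d H := by
    simp only [htsB, LinearMap.mk₂_apply]
    have : ∀ i : Fin d, ∑ j, ∫ U, htsF H (Matrix.single i j 1) (Matrix.single j i 1) U ∂μ =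
        ∫ U, ∑ j, htsF H (Matrix.single i j 1) (Matrix.single j i 1) U ∂μ := by
      intro i
      rw [integral_finsetSum _ fun j _ => htsF_integrable μ H _ _]
    simp only [this]
    rw [← integral_finsetSum _ fun i _ => integrable_finsetSum _ fun j _ => htsF_integrable μ H _ _]
    simp [hts_swap_sum hd0]
  rw [hf] at h1
  simp only [hf] at h2
  have t2 : ∑ i : Fin d, ∑ j : Fin d, (β * ((Matrix.single i j (1 : ℂ)).trace *
      (Matrix.single j i (1 : ℂ)).trace) +
      γ * (Matrix.single i j (1 : ℂ) * Matrix.single j i (1 : ℂ)).trace) =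
      β * d + γ * d ^ 2 := by
    have : ∀ i j : Fin d, β * ((Matrix.single i j (1 : ℂ)).trace *
      (Matrix.single j i (1 : ℂ)).trace) +
      γ * (Matrix.single i j (1 : ℂ) * Matrix.single j i (1 : ℂ)).trace =
      β * (if i = j then 1 else 0) + γ := by
      intro i j
      by_cases h : i = j
      · subst h; simp
      · simp [h, Matrix.trace_single_eq_of_ne]
    simp only [this, Finset.sum_add_distrib]
    simp
    ring
  rw [t2] at h2
  simp only [Matrix.trace_one, Fintype.card_fin, mul_one] at h1
  have hO : (∫ U, htsF H O O U ∂μ) = β * (O.trace * O.trace) + γ * (O * O).trace := by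
    have := hf O O
    simpa only [htsB, LinearMap.mk₂_apply] using this
  change (∫ U, htsF H O O U ∂μ) = _
  rw [hO]
  have hβ : β = -γ / d := by
    field_simp
    apply mul_right_cancel₀ hd0
    linear_combination h1
  have hγ : γ = -(2 * d / ((d : ℂ) ^ 2 - 1)) * DeltaM d H := by
    rw [hβ] at h2
    field_simp at h2 ⊢
    linear_combination h2
  rw [mul_comm (-(2 * d / ((d : ℂ) ^ 2 - 1))) , mul_comm (DeltaM d H)] 
  rw [← hγ, hβ, DeltaM]
  field_simp
  ring
end

section
/- Fix d ≥ 2 and let μ denote the normalized Haar probability measure on the group U(d) of d×d complex unitary matrices. For any d×d complex matrices A, B and C with Tr[C] = 0, the integral over U ∈ U(d) of Tr[U A U† C] · Tr[U B U† C] equals (Tr[AB] − Tr[A]·Tr[B]/d) · Tr[C²] / (d² − 1). -/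
open Matrix MeasureTheory

section Aux

variable {d : ℕ}

/-- Householder vector. -/
lemma aux_sum_two (i j : Fin d) (c s : ℂ) (g : Fin d → ℂ) :
    ∑ p, ((if p = i then c else 0) + (if p = j then s else 0)) * g p = c * g i + s * g j := by
  simp [add_mul, Finset.sum_add_distrib, ite_mul]

/-- The algebraic invariance of a four-tensor. -/
def AuxInv (f : Fin d → Fin d → Fin d → Fin d → ℂ) : Prop :=
  ∀ V ∈ Matrix.unitaryGroup (Fin d) ℂ, ∀ i j k l,
    f i j k l = ∑ p, V i p * ∑ q, star (V j q) * ∑ r, V k r * ∑ s, star (V l s) * f p q r s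

lemma aux_diag (f : Fin d → Fin d → Fin d → Fin d → ℂ) (hf : AuxInv f)
    (v : Fin d → ℂ) (hv : ∀ i, v i * star (v i) = 1) (i j k l : Fin d) :
    f i j k l = v i * star (v j) * v k * star (v l) * f i j k l := by
  have hV : Matrix.diagonal v ∈ Matrix.unitaryGroup (Fin d) ℂ := by
    rw [Matrix.mem_unitaryGroup_iff, Matrix.star_eq_conjTranspose, Matrix.diagonal_conjTranspose,
      Matrix.diagonal_mul_diagonal, ← Matrix.diagonal_one]
    congr 1
    funext i
    exact hv i
  conv_lhs => rw [hf _ hV i j k l]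
  simp [Matrix.diagonal_apply, apply_ite, ite_mul]
  ring

lemma aux_perm (f : Fin d → Fin d → Fin d → Fin d → ℂ) (hf : AuxInv f)
    (σ : Equiv.Perm (Fin d)) (i j k l : Fin d) :
    f i j k l = f (σ i) (σ j) (σ k) (σ l) := by
  have hV : (Matrix.of fun i p => if p = σ i then (1 : ℂ) else 0) ∈
      Matrix.unitaryGroup (Fin d) ℂ := by
    rw [Matrix.mem_unitaryGroup_iff]
    ext a b
    simp [Matrix.mul_apply, Matrix.one_apply, apply_ite, Matrix.star_apply]
    split_ifs with h
    · exact h.symm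
    · exact fun h' => h h'.symm
  rw [hf _ hV i j k l]
  simp [apply_ite]

lemma aux_rot (f : Fin d → Fin d → Fin d → Fin d → ℂ) (hf : AuxInv f)
    (i j : Fin d) (hij : i ≠ j) :
    f i i i i = ∑ p, ((if p = i then (3/5 : ℂ) else 0) + (if p = j then (-4/5 : ℂ) else 0)) *
      ∑ q, ((if q = i then (3/5 : ℂ) else 0) + (if q = j then (-4/5 : ℂ) else 0)) *
      ∑ r, ((if r = i then (3/5 : ℂ) else 0) + (if r = j then (-4/5 : ℂ) else 0)) *
      ∑ s, ((if s = i then (3/5 : ℂ) else 0) + (if s = j then (-4/5 : ℂ) else 0)) * f p q r s := by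
  let u : Fin d → ℂ := fun p => (if p = i then 1 else 0) + (if p = j then 2 else 0)
  have hsu : ∀ p, (starRingEnd ℂ) (u p) = u p := by
    intro p; simp only [u]; split_ifs <;> simp [Complex.conj_ofNat]
  have huu : ∑ p, u p * u p = 5 := by
    have := aux_sum_two i j 1 2 u
    simp only [u] at this ⊢
    rw [this]
    simp [hij, hij.symm]; norm_num
  let V : Matrix (Fin d) (Fin d) ℂ := Matrix.of fun a p => (if p = a then 1 else 0) - 2/5 * u a * u p
  have hsV : ∀ a p, star (V a p) = V a p := by
    intro a p
    simp only [V, Matrix.of_apply, star_sub, star_mul']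
    simp [hsu, apply_ite]
  have hV : V ∈ Matrix.unitaryGroup (Fin d) ℂ := by
    rw [Matrix.mem_unitaryGroup_iff]
    ext a b
    rw [Matrix.mul_apply]
    simp only [Matrix.star_apply, hsV]
    have : ∀ p, V a p * V b p = (if p = a then (if p = b then 1 else 0) else 0)
        - (if p = a then 2/5 * u b * u p else 0) - (if p = b then 2/5 * u a * u p else 0)
        + 4/25 * u a * u b * (u p * u p) := by
      intro p
      simp only [V, Matrix.of_apply]
      split_ifs <;> ring
    simp only [this, Finset.sum_add_distrib, Finset.sum_sub_distrib, ← Finset.mul_sum, huu]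
    simp [Matrix.one_apply]
    ring
  have hrow : ∀ p, V i p = (if p = i then (3/5 : ℂ) else 0) + (if p = j then (-4/5 : ℂ) else 0) := by
    intro p
    simp only [V, Matrix.of_apply, u]
    by_cases h1 : p = i
    · subst h1; simp [hij]; norm_num
    · by_cases h2 : p = j
      · subst h2; simp [hij, h1]; norm_num
      · simp [h1, h2]
  rw [hf V hV i i i i]
  simp only [hsV]
  simp only [hrow]

lemma aux_phase (f : Fin d → Fin d → Fin d → Fin d → ℂ) (hf : AuxInv f)
    (i j k l : Fin d) (h : ¬ ((i = j ∧ k = l) ∨ (i = l ∧ j = k))) : f i j k l = 0 := by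
  have key : ∀ m, f i j k l = _ := fun m =>
    aux_diag f hf (fun p => if p = m then Complex.I else 1)
      (by intro p; by_cases hp : p = m <;> simp [hp]) i j k l
  have key2 : ∀ z : ℂ, z ≠ 1 → f i j k l = z * f i j k l → f i j k l = 0 := by
    intro z hz h
    have : (z - 1) * f i j k l = 0 := by linear_combination -h
    exact (mul_eq_zero.mp this).resolve_left (sub_ne_zero.mpr hz)
  have hI1 : Complex.I ≠ 1 := by intro h; simpa using congrArg Complex.re h
  have hI2 : -Complex.I ≠ 1 := by intro h; simpa using congrArg Complex.re h
  have hI3 : (-1 : ℂ) ≠ 1 := by norm_num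
  by_cases hij : i = j
  · have hkl : k ≠ l := fun hkl => h (Or.inl ⟨hij, hkl⟩)
    subst hij
    have := key k
    refine key2 _ ?_ this
    by_cases hik : i = k
    · simp [hik, hkl.symm, hI1]
    · simp [hik, hkl.symm, hI1]
  · by_cases hil : i = l
    · have hjk : j ≠ k := fun hjk => h (Or.inr ⟨hil, hjk⟩)
      subst hil
      refine key2 _ ?_ (key j)
      simp [hij, hjk.symm, hI2]
    · refine key2 _ ?_ (key i)
      by_cases hik : k = i
      · simp [Ne.symm hij, Ne.symm hil, hik, hI3]
      · simp [Ne.symm hij, Ne.symm hil, hik, hI1]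

lemma aux_exists_perm (i j k l : Fin d) (hij : i ≠ j) (hkl : k ≠ l) :
    ∃ σ : Equiv.Perm (Fin d), σ i = k ∧ σ j = l := by
  refine ⟨(Equiv.swap i k).trans (Equiv.swap (Equiv.swap i k j) l), ?_, ?_⟩
  · simp only [Equiv.trans_apply, Equiv.swap_apply_left]
    apply Equiv.swap_apply_of_ne_of_ne _ hkl
    intro h
    apply hij
    apply (Equiv.swap i k).injective
    rw [← h, Equiv.swap_apply_left]
  · simp

lemma aux_class (hd : 2 ≤ d) (f : Fin d → Fin d → Fin d → Fin d → ℂ) (hf : AuxInv f) :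
    ∃ b c : ℂ, ∀ i j k l, f i j k l = (if i = j then if k = l then b else 0 else 0) +
      (if i = l then if j = k then c else 0 else 0) := by
  let x : Fin d := ⟨0, by omega⟩
  let y : Fin d := ⟨1, by omega⟩
  have hxy : x ≠ y := by simp [x, y]
  have hb : ∀ i k, i ≠ k → f i i k k = f x x y y := by
    intro i k hik
    obtain ⟨σ, h1, h2⟩ := aux_exists_perm i k x y hik hxy
    rw [aux_perm f hf σ, h1, h2]
  have hc : ∀ i k, i ≠ k → f i k k i = f x y y x := by
    intro i k hik
    obtain ⟨σ, h1, h2⟩ := aux_exists_perm i k x y hik hxy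
    rw [aux_perm f hf σ, h1, h2]
  have ha : ∀ i, f i i i i = f x x y y + f x y y x := by
    intro i
    obtain ⟨j, hij⟩ : ∃ j, i ≠ j := by
      by_cases h : i = x
      · exact ⟨y, h ▸ hxy⟩
      · exact ⟨x, h⟩
    have hjj : f j j j j = f i i i i := by
      rw [aux_perm f hf (Equiv.swap i j) j j j j]; simp
    have h0 := aux_phase f hf
    have h := aux_rot f hf i j hij
    simp only [aux_sum_two] at h
    rw [hb i j hij, hb j i hij.symm, hc i j hij, hc j i hij.symm, hjj,
      h0 i i i j (by simp [hij]), h0 i i j i (by simp [hij, hij.symm]),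
      h0 i j i i (by simp [hij, hij.symm]), h0 j i i i (by simp [hij.symm]),
      h0 i j i j (by simp [hij]), h0 j i j i (by simp [hij.symm]),
      h0 j j j i (by simp [hij.symm]), h0 j j i j (by simp [hij, hij.symm]),
      h0 j i j j (by simp [hij, hij.symm]), h0 i j j j (by simp [hij])] at h
    linear_combination (625/288) * h
  refine ⟨f x x y y, f x y y x, fun i j k l => ?_⟩
  by_cases hij : i = j
  · subst hij
    by_cases hkl : k = l
    · subst hkl
      by_cases hik : i = k
      · subst hik; simp [ha]
      · simp [hik, hb]
    · rw [aux_phase f hf i i k l (by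
        rintro (h | h)
        · exact hkl h.2
        · exact hkl (h.2.symm.trans h.1))]
      have : ¬ (i = l ∧ i = k) := fun h => hkl (h.2.symm.trans h.1)
      simp only [hkl, if_true, if_false, zero_add]
      split_ifs <;> simp_all
  · by_cases h : i = l ∧ j = k
    · obtain ⟨rfl, rfl⟩ := h
      simp [hij, hc]
    · rw [aux_phase f hf i j k l (by simp [hij]; simpa using h)]
      simp only [hij, if_false, zero_add]
      split_ifs <;> simp_all

lemma aux_compact : CompactSpace (Matrix.unitaryGroup (Fin d) ℂ) := by
  apply isCompact_iff_compactSpace.mp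
  have hK : IsCompact (Set.pi Set.univ fun _ : Fin d => Set.pi Set.univ fun _ : Fin d =>
      Metric.closedBall (0 : ℂ) 1) :=
    isCompact_univ_pi fun _ => isCompact_univ_pi fun _ => isCompact_closedBall _ _
  have hcl : IsClosed {U : Matrix (Fin d) (Fin d) ℂ | U * star U = 1} :=
    isClosed_eq (by fun_prop) continuous_const
  refine IsCompact.of_isClosed_subset hK ?_ ?_
  · convert hcl using 1
    ext U
    exact Matrix.mem_unitaryGroup_iff
  · intro U hU i _ j _
    simpa using entry_norm_bound_of_unitary hU i j

end Aux

theorem haar_product_of_traces (d : ℕ) (hd : 2 ≤ d)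
    [MeasurableSpace (Matrix.unitaryGroup (Fin d) ℂ)]
    [BorelSpace (Matrix.unitaryGroup (Fin d) ℂ)]
    (μ : Measure (Matrix.unitaryGroup (Fin d) ℂ))
    [μ.IsHaarMeasure] [IsProbabilityMeasure μ]
    (A B C : Matrix (Fin d) (Fin d) ℂ) (hC : C.trace = 0) :
    (∫ U : Matrix.unitaryGroup (Fin d) ℂ,
        (((U : Matrix (Fin d) (Fin d) ℂ) * A * (U : Matrix (Fin d) (Fin d) ℂ)ᴴ * C).trace *
          ((U : Matrix (Fin d) (Fin d) ℂ) * B * (U : Matrix (Fin d) (Fin d) ℂ)ᴴ * C).trace) ∂μ)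
      = ((A * B).trace - A.trace * B.trace / (d : ℂ)) * (C * C).trace / ((d : ℂ) ^ 2 - 1) := by
  have := aux_compact (d := d)
  let X : Matrix (Fin d) (Fin d) ℂ → Matrix.unitaryGroup (Fin d) ℂ → Matrix (Fin d) (Fin d) ℂ :=
    fun A U => (U : Matrix (Fin d) (Fin d) ℂ) * A * (U : Matrix (Fin d) (Fin d) ℂ)ᴴ
  have hXc : ∀ A, Continuous (X A) := by
    intro A
    simp only [X]
    fun_prop
  have hXe : ∀ A i j, Continuous fun U => X A U i j := fun A i j =>
    (continuous_apply j).comp ((continuous_apply i).comp (hXc A))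
  have hint : ∀ i j k l, Integrable (fun U => X A U i j * X B U k l) μ := fun i j k l =>
    ((hXe A i j).mul (hXe B k l)).integrable_of_hasCompactSupport
      (HasCompactSupport.of_compactSpace _)
  have hUU : ∀ U : Matrix.unitaryGroup (Fin d) ℂ,
      (U : Matrix (Fin d) (Fin d) ℂ)ᴴ * (U : Matrix (Fin d) (Fin d) ℂ) = 1 := fun U =>
    Matrix.mem_unitaryGroup_iff'.mp U.2
  have hXtr : ∀ A U, (X A U).trace = A.trace := by
    intro A U
    simp only [X]
    rw [Matrix.trace_mul_comm, ← Matrix.mul_assoc, hUU, Matrix.one_mul]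
  have hXX : ∀ U, (X A U * X B U).trace = (A * B).trace := by
    intro U
    have : X A U * X B U = X (A * B) U := by
      simp only [X]
      calc _ = (U : Matrix (Fin d) (Fin d) ℂ) * A * ((U : Matrix (Fin d) (Fin d) ℂ)ᴴ *
            (U : Matrix (Fin d) (Fin d) ℂ)) * B * (U : Matrix (Fin d) (Fin d) ℂ)ᴴ := by
              simp only [Matrix.mul_assoc]
        _ = _ := by rw [hUU]; simp only [Matrix.mul_assoc, Matrix.one_mul]
    rw [this, hXtr]
  let f : Fin d → Fin d → Fin d → Fin d → ℂ := fun i j k l => ∫ U, X A U i j * X B U k l ∂μ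
  -- expansion of general linear combinations
  have hlin : ∀ w : Fin d → Fin d → Fin d → Fin d → ℂ,
      ∫ U, (∑ p, ∑ q, ∑ r, ∑ s, w p q r s * (X A U p q * X B U r s)) ∂μ =
        ∑ p, ∑ q, ∑ r, ∑ s, w p q r s * f p q r s := by
    intro w
    have h4 : ∀ p q r s, Integrable (fun U => w p q r s * (X A U p q * X B U r s)) μ :=
      fun p q r s => (hint p q r s).const_mul _
    have h3 : ∀ p q r, Integrable (fun U => ∑ s, w p q r s * (X A U p q * X B U r s)) μ :=
      fun p q r => integrable_finsetSum _ fun s _ => h4 p q r s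
    have h2 : ∀ p q, Integrable (fun U => ∑ r, ∑ s, w p q r s * (X A U p q * X B U r s)) μ :=
      fun p q => integrable_finsetSum _ fun r _ => h3 p q r
    have h1 : ∀ p, Integrable (fun U => ∑ q, ∑ r, ∑ s, w p q r s * (X A U p q * X B U r s)) μ :=
      fun p => integrable_finsetSum _ fun q _ => h2 p q
    rw [integral_finsetSum _ fun p _ => h1 p]
    refine Finset.sum_congr rfl fun p _ => ?_
    rw [integral_finsetSum _ fun q _ => h2 p q]
    refine Finset.sum_congr rfl fun q _ => ?_
    rw [integral_finsetSum _ fun r _ => h3 p q r]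
    refine Finset.sum_congr rfl fun r _ => ?_
    rw [integral_finsetSum _ fun s _ => h4 p q r s]
    refine Finset.sum_congr rfl fun s _ => ?_
    rw [integral_const_mul]
  have hconj : ∀ (V M : Matrix (Fin d) (Fin d) ℂ) i j,
      (V * M * Vᴴ) i j = ∑ p, ∑ q, V i p * star (V j q) * M p q := by
    intro V M i j
    simp only [Matrix.mul_apply, Matrix.conjTranspose_apply, Finset.sum_mul]
    rw [Finset.sum_comm]
    refine Finset.sum_congr rfl fun p _ => Finset.sum_congr rfl fun q _ => by ring
  have hinv : AuxInv f := by
    intro V hV i j k l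
    have h1 : f i j k l = ∫ U, X A (⟨V, hV⟩ * U) i j * X B (⟨V, hV⟩ * U) k l ∂μ :=
      (integral_mul_left_eq_self (fun U => X A U i j * X B U k l) ⟨V, hV⟩).symm
    have h2 : ∀ A U, X A (⟨V, hV⟩ * U) = V * X A U * Vᴴ := by
      intro A U
      simp [X, Matrix.mul_assoc, Matrix.conjTranspose_mul]
    rw [h1]
    simp only [h2, hconj]
    have h3 := hlin fun p q r s => V i p * star (V j q) * (V k r * star (V l s))
    refine Eq.trans ?_ (h3.trans ?_)
    · congr 1
      funext U
      simp only [Finset.sum_mul]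
      refine Finset.sum_congr rfl fun p _ => Finset.sum_congr rfl fun q _ => ?_
      simp only [Finset.mul_sum]
      refine Finset.sum_congr rfl fun r _ => Finset.sum_congr rfl fun s _ => by ring
    · simp only [Finset.mul_sum]
      refine Finset.sum_congr rfl fun p _ => Finset.sum_congr rfl fun q _ =>
        Finset.sum_congr rfl fun r _ => Finset.sum_congr rfl fun s _ => by ring
  obtain ⟨b, c, hbc⟩ := aux_class hd f hinv
  -- general trace formula
  have hgen : ∀ C D : Matrix (Fin d) (Fin d) ℂ,
      ∫ U, (X A U * C).trace * (X B U * D).trace ∂μ =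
        b * (C.trace * D.trace) + c * (C * D).trace := by
    intro C D
    have h3 := hlin fun p q r s => C q p * D s r
    refine Eq.trans ?_ (h3.trans ?_)
    · congr 1
      funext U
      simp only [Matrix.trace, Matrix.diag_apply, Matrix.mul_apply, Finset.sum_mul]
      refine Finset.sum_congr rfl fun p _ => Finset.sum_congr rfl fun q _ => ?_
      simp only [Finset.mul_sum]
      refine Finset.sum_congr rfl fun r _ => Finset.sum_congr rfl fun s _ => by ring
    · simp only [hbc, mul_add, Finset.sum_add_distrib]
      congr 1
      · simp [Matrix.trace, Finset.sum_mul, Finset.mul_sum]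
        rw [Finset.sum_comm]
        refine Finset.sum_congr rfl fun p _ => Finset.sum_congr rfl fun q _ => by ring
      · simp [Matrix.trace, Matrix.mul_apply, Finset.mul_sum]
        rw [Finset.sum_comm]
        refine Finset.sum_congr rfl fun p _ => Finset.sum_congr rfl fun q _ => by ring
  have e1 : A.trace * B.trace = b * (d * d) + c * d := by
    have := hgen 1 1
    simpa [hXtr] using this
  have e2 : (A * B).trace = b * d + c * (d * d) := by
    have h3 := hlin fun p q r s => if q = r then if p = s then 1 else 0 else 0
    have h4 : ∀ U, (∑ p, ∑ q, ∑ r, ∑ s, (if q = r then if p = s then (1:ℂ) else 0 else 0) *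
        (X A U p q * X B U r s)) = (A * B).trace := by
      intro U
      rw [← hXX U]
      simp [Matrix.trace, Matrix.mul_apply, ite_mul]
    simp only [h4, hbc] at h3
    simp [mul_add, Finset.sum_add_distrib, ite_mul] at h3
    rw [h3]; ring
  have hd0 : (d : ℂ) ≠ 0 := by
    have : d ≠ 0 := by omega
    exact_mod_cast this
  have hd1 : (d : ℂ) ^ 2 - 1 ≠ 0 := by
    intro h
    have h' : (d : ℂ) ^ 2 = 1 := by linear_combination h
    have : d ^ 2 = 1 := by exact_mod_cast h'
    nlinarith
  have hmain := hgen C C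
  simp only [X] at hmain
  rw [hmain, hC, e1, e2]
  field_simp
  ring
end

section
/- Let n and m be natural numbers with 2m ≤ n, set d = n − 2m + 1, and for an integer w define e(w) = (n² − n(4w+1) + 4w²)/2 ∈ ℚ. Then Σ_{w=m}^{n−m} e(w)² − (Σ_{w=m}^{n−m} e(w))² / d = (8/3) · C(d + 2, 5), as rational numbers. (This computes Δ(A_λ) = (8/3)·C(d_λ+2, 5) for the restriction to the irrep block λ = (n−m,m) of the two-body S_n-equivariant operator A = Σ_{k<j} χ_j χ_k, whose eigenvalue on a computational basis state of Hamming weight w is e(w) and whose admissible weights in block λ are w ∈ {m, …, n−m}.) -/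
lemma aux_sum (a c : ℚ) (D : ℕ) :
    ∑ i ∈ Finset.range D, ((a - 2 * (i : ℚ)) ^ 2 - c) / 2 =
      (D * (a ^ 2 - c) - 4 * a * (D * (D - 1) / 2) + 4 * (D * (D - 1) * (2 * D - 1) / 6)) / 2 := by
  induction D with
  | zero => simp
  | succ D ih => rw [Finset.sum_range_succ, ih]; push_cast; ring

lemma aux_sum_sq (a c : ℚ) (D : ℕ) :
    ∑ i ∈ Finset.range D, (((a - 2 * (i : ℚ)) ^ 2 - c) / 2) ^ 2 =
      (D * (a ^ 2 - c) ^ 2 - 8 * a * (a ^ 2 - c) * (D * (D - 1) / 2)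
        + (16 * a ^ 2 + 8 * (a ^ 2 - c)) * (D * (D - 1) * (2 * D - 1) / 6)
        - 32 * a * (D * (D - 1) / 2) ^ 2
        + 16 * (D * (D - 1) * (2 * D - 1) * (3 * D ^ 2 - 3 * D - 1) / 30)) / 4 := by
  induction D with
  | zero => simp
  | succ D ih => rw [Finset.sum_range_succ, ih]; push_cast; ring

lemma aux_c2 (k : ℕ) : (k.choose 2 : ℚ) = k * (k - 1) / 2 := by
  induction k with
  | zero => simp
  | succ k ih => rw [Nat.choose_succ_succ' k 1, Nat.cast_add, ih, Nat.choose_one_right]; push_cast; ring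

lemma aux_c3 (k : ℕ) : (k.choose 3 : ℚ) = k * (k - 1) * (k - 2) / 6 := by
  induction k with
  | zero => simp
  | succ k ih => rw [Nat.choose_succ_succ' k 2, Nat.cast_add, ih, aux_c2]; push_cast; ring

lemma aux_c4 (k : ℕ) : (k.choose 4 : ℚ) = k * (k - 1) * (k - 2) * (k - 3) / 24 := by
  induction k with
  | zero => simp
  | succ k ih => rw [Nat.choose_succ_succ' k 3, Nat.cast_add, ih, aux_c3]; push_cast; ring

lemma aux_c5 (k : ℕ) :
    (k.choose 5 : ℚ) = k * (k - 1) * (k - 2) * (k - 3) * (k - 4) / 120 := by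
  induction k with
  | zero => simp
  | succ k ih => rw [Nat.choose_succ_succ' k 4, Nat.cast_add, ih, aux_c4]; push_cast; ring

/-- **Two-body block variance.** With `d = n − 2m + 1` and
`e(w) = (n² − n(4w+1) + 4w²)/2`, one has
`Σ_{w=m}^{n−m} e(w)² − (Σ_{w=m}^{n−m} e(w))²/d = (8/3)·C(d+2, 5)`. -/
theorem two_body_block_variance (n m : ℕ) (h : 2 * m ≤ n) (d : ℕ) (hd : d = n - 2 * m + 1)
    (e : ℕ → ℚ) (he : ∀ w : ℕ, e w = ((n : ℚ) ^ 2 - n * (4 * w + 1) + 4 * w ^ 2) / 2) :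
    (∑ w ∈ Finset.Icc m (n - m), e w ^ 2) -
        (∑ w ∈ Finset.Icc m (n - m), e w) ^ 2 / (d : ℚ)
      = (8 / 3) * ((d + 2).choose 5 : ℚ) := by
  obtain ⟨k, rfl⟩ := Nat.exists_eq_add_of_le h
  have hk : d = k + 1 := by omega
  clear hd
  subst hk
  have hI : Finset.Icc m (2 * m + k - m) = Finset.Ico m (m + (k + 1)) := by
    ext x
    simp only [Finset.mem_Icc, Finset.mem_Ico]
    omega
  have he' : ∀ i : ℕ, e (m + i) = (((k : ℚ) - 2 * (i : ℚ)) ^ 2 - (2 * m + k)) / 2 := by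
    intro i
    rw [he]
    push_cast
    ring
  rw [hI, Finset.sum_Ico_eq_sum_range, Finset.sum_Ico_eq_sum_range]
  simp only [Nat.add_sub_cancel_left, he']
  rw [aux_sum, aux_sum_sq, aux_c5]
  have : (k : ℚ) + 1 ≠ 0 := by positivity
  push_cast
  field_simp
  ring
end

section
/- Fix n ≥ 1 and let 0 < ε ≤ 1. There exists a finite set K of 2^n × 2^n complex matrices such that: (i) every V ∈ K is unitary and satisfies V·R(π) = R(π)·V for all permutations π ∈ S_n; (ii) the cardinality of K is at most (6/ε)^{2·C(n+3,3)}; and (iii) for every 2^n × 2^n unitary matrix U satisfying U·R(π) = R(π)·U for all π ∈ S_n, there exists V ∈ K with ‖U − V‖ ≤ ε, where ‖·‖ is the operator norm induced by the Euclidean norm on ℂ^{2^n}. That is, the ε-covering number of the set of S_n-equivariant unitaries in operator norm is at most (6/ε)^{2·Te_{n+1}}. -/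
open Matrix

/-- The spectral norm (operator norm induced by the Euclidean norm) of a matrix. -/
noncomputable def specNorm (n : ℕ) (A : Matrix (Fin n → Fin 2) (Fin n → Fin 2) ℂ) : ℝ :=
  ‖Matrix.toEuclideanCLM (𝕜 := ℂ) A‖

open MeasureTheory Metric Module
open scoped ENNReal Function Matrix.Norms.L2Operator

/-- Volume bound for separated subsets of the unit ball. -/
theorem card_le_of_sep {E : Type*} [NormedAddCommGroup E] [NormedSpace ℝ E]
    [FiniteDimensional ℝ E] (ε : ℝ) (hε0 : 0 < ε) (s : Finset E) (hs : ∀ c ∈ s, ‖c‖ ≤ 1)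
    (h : ∀ c ∈ s, ∀ d ∈ s, c ≠ d → ε ≤ ‖c - d‖) :
    (s.card : ℝ) ≤ ((1 + ε / 2) / (ε / 2)) ^ finrank ℝ E := by
  borelize E
  let μ : Measure E := Measure.addHaar
  have δpos : 0 < ε / 2 := by positivity
  have ρpos : 0 < 1 + ε / 2 := by positivity
  generalize hδ : ε / 2 = δ at *
  generalize hρ : 1 + δ = ρ at *
  set A := ⋃ c ∈ s, ball (c : E) δ with hA
  have D : Set.Pairwise (s : Set E) (Disjoint on fun c => ball (c : E) δ) := by
    rintro c hc d hd hcd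
    apply ball_disjoint_ball
    rw [dist_eq_norm]
    have := h c hc d hd hcd
    linarith
  have A_subset : A ⊆ ball (0 : E) ρ := by
    refine Set.iUnion₂_subset fun x hx => ?_
    apply ball_subset_ball'
    rw [dist_zero_right]
    have := hs x hx
    linarith
  have I :
    (s.card : ℝ≥0∞) * ENNReal.ofReal (δ ^ finrank ℝ E) * μ (ball 0 1) ≤
      ENNReal.ofReal (ρ ^ finrank ℝ E) * μ (ball 0 1) :=
    calc
      (s.card : ℝ≥0∞) * ENNReal.ofReal (δ ^ finrank ℝ E) * μ (ball 0 1) = μ A := by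
        rw [hA, measure_biUnion_finset D fun c _ => measurableSet_ball]
        simp only [μ.addHaar_ball_of_pos _ δpos]
        simp only [Finset.sum_const, nsmul_eq_mul, mul_assoc]
      _ ≤ μ (ball (0 : E) ρ) := measure_mono A_subset
      _ = ENNReal.ofReal (ρ ^ finrank ℝ E) * μ (ball 0 1) := by
        simp only [μ.addHaar_ball_of_pos _ ρpos]
  have J : (s.card : ℝ≥0∞) * ENNReal.ofReal (δ ^ finrank ℝ E) ≤ ENNReal.ofReal (ρ ^ finrank ℝ E) :=
    (ENNReal.mul_le_mul_iff_left (measure_ball_pos _ _ zero_lt_one).ne' measure_ball_lt_top.ne).1 I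
  have := ENNReal.toReal_le_of_le_ofReal (pow_nonneg ρpos.le _) J
  rw [ENNReal.toReal_mul, ENNReal.toReal_ofReal (by positivity), ENNReal.toReal_natCast] at this
  rw [div_pow, le_div_iff₀ (by positivity)]
  exact this

/-- A maximal separated set inside a subset of the unit ball is a cover. -/
theorem exists_cover {E : Type*} [NormedAddCommGroup E] [NormedSpace ℝ E]
    [FiniteDimensional ℝ E] (ε : ℝ) (hε0 : 0 < ε) (S : Set E) (hS : ∀ c ∈ S, ‖c‖ ≤ 1) :
    ∃ K : Finset E, (∀ c ∈ K, c ∈ S) ∧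
      (K.card : ℝ) ≤ ((1 + ε / 2) / (ε / 2)) ^ finrank ℝ E ∧
      ∀ c ∈ S, ∃ d ∈ K, ‖c - d‖ ≤ ε := by
  classical
  let P : ℕ → Prop := fun m => ∃ K : Finset E, K.card = m ∧ (∀ c ∈ K, c ∈ S) ∧
    ∀ c ∈ K, ∀ d ∈ K, c ≠ d → ε ≤ ‖c - d‖
  let B := ⌊((1 + ε / 2) / (ε / 2)) ^ finrank ℝ E⌋₊
  have hB : ∀ m, P m → m ≤ B := by
    rintro m ⟨K, rfl, h1, h2⟩
    exact Nat.le_floor (card_le_of_sep ε hε0 K (fun c hc => hS c (h1 c hc)) h2)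
  have h0 : P 0 := ⟨∅, by simp⟩
  have hP : P (Nat.findGreatest P B) := Nat.findGreatest_spec (Nat.zero_le _) h0
  obtain ⟨K, hK, h1, h2⟩ := hP
  refine ⟨K, h1, card_le_of_sep ε hε0 K (fun c hc => hS c (h1 c hc)) h2, ?_⟩
  intro c hc
  by_contra hcon
  push Not at hcon
  have hcK : c ∉ K := fun h => by
    have := hcon c h
    simp at this
    linarith
  have hP' : P (K.card + 1) := by
    refine ⟨insert c K, Finset.card_insert_of_notMem hcK, ?_, ?_⟩
    · intro x hx
      rcases Finset.mem_insert.1 hx with rfl | hx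
      · exact hc
      · exact h1 x hx
    · intro x hx y hy hxy
      rcases Finset.mem_insert.1 hx with rfl | hx2 <;> rcases Finset.mem_insert.1 hy with rfl | hy2
      · exact absurd rfl hxy
      · exact (hcon y hy2).le
      · rw [norm_sub_rev]
        exact (hcon x hx2).le
      · exact h2 x hx2 y hy2 hxy
  have := Nat.le_findGreatest (hB _ hP') hP'
  omega

/-- The orbit type of a tuple under permutations. -/
def tupleType {n : ℕ} {α : Type*} (f : Fin n → α) : Sym α n :=
  ⟨Finset.univ.val.map f, by simp⟩

theorem exists_perm_of_tupleType_eq {n : ℕ} {α : Type*} [DecidableEq α] (f g : Fin n → α)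
    (h : tupleType f = tupleType g) : ∃ π : Equiv.Perm (Fin n), ∀ i, g (π i) = f i := by
  have h' : Finset.univ.val.map f = Finset.univ.val.map g := congrArg Subtype.val h
  have hc : ∀ a, Fintype.card {i // f i = a} = Fintype.card {i // g i = a} := by
    intro a
    have := congrArg (Multiset.count a) h'
    rw [Multiset.count_map, Multiset.count_map] at this
    rw [Fintype.card_subtype, Fintype.card_subtype, Finset.card_def, Finset.card_def,
      Finset.filter_val, Finset.filter_val]
    simpa [eq_comm] using this
  exact ⟨Equiv.ofFiberEquiv fun a => Fintype.equivOfCardEq (hc a),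
    fun i => Equiv.ofFiberEquiv_map _ i⟩

/-- The commutant of the qubit representation. -/
noncomputable def commutantSub (n : ℕ) :
    Submodule ℂ (Matrix (Fin n → Fin 2) (Fin n → Fin 2) ℂ) where
  carrier := {A | ∀ π : Equiv.Perm (Fin n), A * qubitRep n π = qubitRep n π * A}
  add_mem' := fun {a b} ha hb π => by rw [add_mul, mul_add, ha π, hb π]
  zero_mem' := fun π => by simp
  smul_mem' := fun c A hA π => by rw [smul_mul_assoc, mul_smul_comm, hA π]

theorem commutant_entry {n : ℕ} {A : Matrix (Fin n → Fin 2) (Fin n → Fin 2) ℂ}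
    (hA : A ∈ commutantSub n) (π : Equiv.Perm (Fin n)) (y z : Fin n → Fin 2) :
    A (fun i => y (π i)) (fun i => z (π i)) = A y z := by
  have h := congrFun (congrFun (hA π.symm) (fun i => y (π i))) z
  rw [Matrix.mul_apply, Matrix.mul_apply] at h
  rw [Finset.sum_eq_single (fun i => z (π i)), Finset.sum_eq_single y] at h
  · simpa [qubitRep] using h
  · intro w _ hw
    have : ¬ ((fun i => y (π i)) = fun i => w (π i)) := fun e => hw (by
      funext i
      have := congrFun e (π.symm i)
      simpa using this.symm)
    simp [qubitRep, this]
  · simp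
  · intro w _ hw
    simp [qubitRep, hw]
  · simp

/-- Coordinates on the commutant, one for each orbit type. -/
noncomputable def commutantCoord (n : ℕ) :
    commutantSub n →ₗ[ℂ] (Sym (Fin 2 × Fin 2) n → ℂ) where
  toFun A := fun s => (A : Matrix (Fin n → Fin 2) (Fin n → Fin 2) ℂ)
    (fun i => (Function.invFun (tupleType (n := n) (α := Fin 2 × Fin 2)) s i).1)
    (fun i => (Function.invFun (tupleType (n := n) (α := Fin 2 × Fin 2)) s i).2)
  map_add' A B := by
    funext s
    simp
  map_smul' c A := by
    funext s
    simp

theorem commutantCoord_injective (n : ℕ) : Function.Injective (commutantCoord n) := by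
  rw [injective_iff_map_eq_zero]
  intro A hA
  apply Subtype.ext
  ext y z
  let p : Fin n → Fin 2 × Fin 2 := fun i => (y i, z i)
  have hq : tupleType (Function.invFun tupleType (tupleType p)) = tupleType p :=
    Function.invFun_eq ⟨p, rfl⟩
  obtain ⟨π, hπ⟩ := exists_perm_of_tupleType_eq _ _ hq
  have h1 := commutant_entry A.2 π y z
  have h2 := congrFun hA (tupleType p)
  have hy : (fun i => y (π i)) = fun i => (Function.invFun tupleType (tupleType p) i).1 := by
    funext i
    rw [← hπ i]
  have hz : (fun i => z (π i)) = fun i => (Function.invFun tupleType (tupleType p) i).2 := by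
    funext i
    rw [← hπ i]
  rw [hy, hz] at h1
  rw [← h1]
  exact h2

theorem finrank_commutant_le (n : ℕ) : finrank ℂ (commutantSub n) ≤ (n + 3).choose 3 := by
  have h := LinearMap.finrank_le_finrank_of_injective (commutantCoord_injective n)
  rw [Module.finrank_fintype_fun_eq_card, Sym.card_sym_eq_choose] at h
  simp only [Fintype.card_prod, Fintype.card_fin] at h
  have e : 2 * 2 + n - 1 = n + 3 := by omega
  rw [e, Nat.choose_symm_add] at h
  exact h

/-- **Covering number of `S_n`-equivariant unitaries.** For `0 < ε ≤ 1`, the set of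
`S_n`-equivariant `2^n × 2^n` unitaries admits an `ε`-cover in spectral norm of cardinality
at most `(6/ε)^{2·C(n+3,3)}`. -/
theorem covering_number_equivariant_unitaries (n : ℕ) (hn : 1 ≤ n) (ε : ℝ)
    (hε0 : 0 < ε) (hε1 : ε ≤ 1) :
    ∃ K : Finset (Matrix (Fin n → Fin 2) (Fin n → Fin 2) ℂ),
      (∀ V ∈ K, V ∈ Matrix.unitaryGroup (Fin n → Fin 2) ℂ ∧
        ∀ π : Equiv.Perm (Fin n), V * qubitRep n π = qubitRep n π * V) ∧
      (K.card : ℝ) ≤ (6 / ε) ^ (2 * (n + 3).choose 3) ∧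
      (∀ U : Matrix (Fin n → Fin 2) (Fin n → Fin 2) ℂ,
        U ∈ Matrix.unitaryGroup (Fin n → Fin 2) ℂ →
        (∀ π : Equiv.Perm (Fin n), U * qubitRep n π = qubitRep n π * U) →
        ∃ V ∈ K, specNorm n (U - V) ≤ ε) := by
  have hfr : finrank ℝ (commutantSub n) ≤ 2 * (n + 3).choose 3 := by
    rw [finrank_real_of_complex]
    exact Nat.mul_le_mul_left 2 (finrank_commutant_le n)
  haveI : FiniteDimensional ℝ (commutantSub n) := FiniteDimensional.complexToReal _
  obtain ⟨K, hK1, hK2, hK3⟩ := exists_cover (E := commutantSub n) ε hε0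
    {A | (A : Matrix (Fin n → Fin 2) (Fin n → Fin 2) ℂ) ∈
      Matrix.unitaryGroup (Fin n → Fin 2) ℂ} (by
        intro c hc
        exact (CStarRing.norm_of_mem_unitary (U := (c : Matrix (Fin n → Fin 2) (Fin n → Fin 2) ℂ)) hc).le)
  refine ⟨K.map ⟨Subtype.val, Subtype.val_injective⟩, ?_, ?_, ?_⟩
  · intro V hV
    obtain ⟨W, hW, rfl⟩ := Finset.mem_map.1 hV
    exact ⟨hK1 W hW, W.2⟩
  · rw [Finset.card_map]
    have h6 : (1 + ε / 2) / (ε / 2) ≤ 6 / ε := by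
      rw [div_le_div_iff₀ (by positivity) hε0]
      nlinarith
    have h1 : 1 ≤ 6 / ε := by
      rw [le_div_iff₀ hε0]
      linarith
    calc (K.card : ℝ) ≤ _ := hK2
      _ ≤ (6 / ε) ^ finrank ℝ (commutantSub n) :=
        pow_le_pow_left₀ (by positivity) h6 _
      _ ≤ _ := pow_le_pow_right₀ h1 hfr
  · intro U hU hU2
    obtain ⟨V, hV, h⟩ := hK3 ⟨U, hU2⟩ hU
    exact ⟨V, Finset.mem_map.2 ⟨V, hV, rfl⟩, h⟩
end
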